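/- Let X be a finite set with |X| = n ≥ 2. Then the diameter of the set of total preorders on X with respect to the top-difference semimetric D equals n·2^{n−1} + 2 − 2^{⌊n/2⌋} − 2^{⌈n/2⌉}; that is, D(≿,⊵) ≤ n·2^{n−1} + 2 − 2^{⌊n/2⌋} − 2^{⌈n/2⌉} for all total preorders ≿, ⊵ on X, and this bound is attained by some pair of total preorders. -/

import Mathlib

open Classical Finset symmDiff

section PrefDefs

variable {X : Type*}

/-- The asymmetric part `R^>` of a binary relation `R`. -/
def asymPart (R : X → X → Prop) : X → X → Prop := fun x y => R x y ∧ ¬ R y x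

/-- `R` is acyclic: there is no cycle of pairwise distinct elements
`z_0 R^> z_1 R^> ⋯ R^> z_k R^> z_0`. -/
def AcyclicRel (R : X → X → Prop) : Prop :=
  ¬ ∃ (k : ℕ) (z : Fin (k + 1) → X), Function.Injective z ∧
      ∀ i : Fin (k + 1), asymPart R (z i) (z (i + 1))

/-- An acyclic order: a reflexive acyclic binary relation. -/
def AcyclicOrd (R : X → X → Prop) : Prop := Reflexive R ∧ AcyclicRel R

/-- `M(S,R)`: the set of `R`-maximal elements of `S`. -/
noncomputable def MaxSet [DecidableEq X] (S : Finset X) (R : X → X → Prop) : Finset X :=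
  S.filter fun x => ∀ y ∈ S, ¬ asymPart R y x

/-- The μ-top-difference semimetric, where the measure μ is given by the
weights `w x = μ {x}`. -/
noncomputable def Dmu [Fintype X] [DecidableEq X] (w : X → ℝ) (R R' : X → X → Prop) : ℝ :=
  ∑ S : Finset X, ∑ x ∈ symmDiff (MaxSet S R) (MaxSet S R'), w x

/-- The top-difference semimetric `D`. -/
noncomputable def Dtop [Fintype X] [DecidableEq X] (R R' : X → X → Prop) : ℕ :=
  ∑ S : Finset X, (symmDiff (MaxSet S R) (MaxSet S R')).card

/-- `≿ ⊕ (a,b)`: if `b ∼ a` delete `(b,a)`, if `a, b` are `≿`-incomparable add `(a,b)`. -/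
def oplusR (R : X → X → Prop) (a b : X) : X → X → Prop :=
  fun x y => (R x y ∧ ¬(R b a ∧ x = b ∧ y = a)) ∨ (¬ R b a ∧ x = a ∧ y = b)

/-- `≿ ⊖ (a,b)`: delete the pair `(a,b)`. -/
def ominusR (R : X → X → Prop) (a b : X) : X → X → Prop :=
  fun x y => R x y ∧ ¬(x = a ∧ y = b)

/-- `≿ → ≿_0 ↠ ⊵` : `R0` is a one-step perturbation of `R` toward `R'`. -/
def OneStep (R R0 R' : X → X → Prop) : Prop :=
  AcyclicOrd R0 ∧
  ((∃ a b, asymPart R a b ∧ ¬ asymPart R' a b ∧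
      (∀ x, asymPart R' x b → asymPart R x b) ∧ R0 = ominusR R a b) ∨
   (∃ a b, ¬ asymPart R a b ∧ ¬ asymPart R b a ∧ asymPart R' a b ∧ R0 = oplusR R a b))

/-- `Q` is in-between `R` and `R'` : `Q` is an n-step perturbation of `R` toward `R'`
for some positive integer n. -/
def InBetween (R R' Q : X → X → Prop) : Prop :=
  ∃ (n : ℕ) (c : Fin (n + 1) → (X → X → Prop)),
    OneStep R (c 0) R' ∧
    (∀ i : Fin n, OneStep (c i.castSucc) (c i.succ) R') ∧
    c (Fin.last n) = Q

/-- `N(b,≿)`: the number of `x ≠ b` with not `x ≻ b`. -/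
noncomputable def Nnum [Fintype X] (R : X → X → Prop) (b : X) : ℕ :=
  (Finset.univ.filter fun x => x ≠ b ∧ ¬ asymPart R x b).card

/-- `≿_{ab}`: the partial order whose asymmetric part is `(X \ {a,b}) × {a,b}`. -/
def RabRel (a b : X) : X → X → Prop :=
  fun x y => x = y ∨ ((x ≠ a ∧ x ≠ b) ∧ (y = a ∨ y = b))

/-- `≿_{ab}^+`: as `≿_{ab}` but with `a` ranked strictly above `b`. -/
def RabPlusRel (a b : X) : X → X → Prop :=
  fun x y => RabRel a b x y ∨ (x = a ∧ y = b)

/-- `d` is a semimetric on the set of acyclic orders on `X`. -/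
def IsSemimetricOn (d : (X → X → Prop) → (X → X → Prop) → ℝ) : Prop :=
  (∀ R R', AcyclicOrd R → AcyclicOrd R' → 0 ≤ d R R') ∧
  (∀ R, AcyclicOrd R → d R R = 0) ∧
  (∀ R R', AcyclicOrd R → AcyclicOrd R' → d R R' = d R' R) ∧
  (∀ R R' R'', AcyclicOrd R → AcyclicOrd R' → AcyclicOrd R'' →
    d R R'' ≤ d R R' + d R' R'')

/-- Axiom 1. -/
def Axiom1 (d : (X → X → Prop) → (X → X → Prop) → ℝ) : Prop :=
  ∀ R R0 R' : X → X → Prop, AcyclicOrd R → AcyclicOrd R' →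
    InBetween R R' R0 → d R R' = d R R0 + d R0 R'

/-- Axiom 2. -/
def Axiom2 (d : (X → X → Prop) → (X → X → Prop) → ℝ) : Prop :=
  ∀ a b : X, a ≠ b → d (RabRel a b) (RabPlusRel a b) = 1

/-- Axiom 3. -/
def Axiom3 [Fintype X] (d : (X → X → Prop) → (X → X → Prop) → ℝ) : Prop :=
  (∀ (R : X → X → Prop) (a b : X), AcyclicOrd R → a ≠ b →
      ¬ asymPart R a b → ¬ asymPart R b a → AcyclicOrd (oplusR R a b) →
      d R (oplusR R a b) = (2 : ℝ) ^ (Nnum R b - 1) * d (RabRel a b) (RabPlusRel a b)) ∧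
  (∀ (R : X → X → Prop) (a b : X), AcyclicOrd R → asymPart R a b →
      d R (ominusR R a b) = (2 : ℝ) ^ (Nnum R b) * d (RabRel a b) (RabPlusRel a b))

/-- Axiom 4. -/
def Axiom4 (d : (X → X → Prop) → (X → X → Prop) → ℝ) : Prop :=
  ∀ R R' : X → X → Prop, AcyclicOrd R → AcyclicOrd R' →
    (∀ x y, asymPart R x y ↔ asymPart R' x y) → d R R' = 0

end PrefDefs


/-- A total preorder: reflexive, transitive and total. -/
def TotalPreorderRel {X : Type*} (R : X → X → Prop) : Prop :=
  Reflexive R ∧ Transitive R ∧ Total R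

/-!
Bounding every `|M(S,≿) △ M(S,⊵)|` by `|S|` gives `n·2^{n-1}`, and at least one is lost at every `S`
for which `M(S,≿) △ M(S,⊵) ≠ S`. Join `x` and `y` when `≿` and `⊵` rank them strictly and in
opposite ways. If nothing is lost at `S`, then the graph on `S` is complete bipartite between
`M(S,≿)` and `M(S,⊵)`, so it has no isolated vertex and no triangle. By induction, a graph on `n`
vertices has at most `2^n + 2 - 2^⌊n/2⌋ - 2^⌈n/2⌉` such vertex sets. Indeed, some vertex `v` has at
least `2^⌊(n-1)/2⌋` sets of other vertices to which it cannot be added: all sets of non-neighbours,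
if the degree of `v` is at most `n/2`; and if all degrees exceed `n/2`, then there is a triangle
`v, u, w`, and the empty set and all sets containing `u` and `w` will do.

The bound is attained by splitting `X` into halves `A` and `B`, letting `≿` have top class `A` and
rank `B` linearly, and `⊵` have top class `B` and rank `A` linearly: the loss is one for every
nonempty subset of `A` or of `B`.
-/

section Counting

variable {α : Type*}

theorem card_filter_add_card_le_of_forall_not {s t : Finset α} {p : α → Prop}
    (hts : t ⊆ s) (hp : ∀ x ∈ t, ¬ p x) : #{x ∈ s | p x} + #t ≤ #s := by
  have ht : #t ≤ #{x ∈ s | ¬ p x} :=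
    card_le_card fun x hx => mem_filter.2 ⟨hts hx, hp x hx⟩
  have hs := card_filter_add_card_filter_not (s := s) fun x => p x
  omega

theorem card_filter_powerset_eq_add_of_mem [DecidableEq α] (p : Finset α → Prop)
    {s : Finset α} {a : α} (ha : a ∈ s) :
    #{t ∈ s.powerset | p t} =
      #{t ∈ (s.erase a).powerset | p t} + #{t ∈ (s.erase a).powerset | p (insert a t)} := by
  have h := sum_powerset_insert (notMem_erase a s) fun t => if p t then 1 else 0
  rw [insert_erase ha] at h
  simpa only [card_filter] using h

theorem sum_card_finset (α : Type*) [Fintype α] :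
    ∑ s : Finset α, #s = Fintype.card α * 2 ^ (Fintype.card α - 1) := by
  rw [← powerset_univ, sum_powerset_apply_card (fun k => k), card_univ,
    ← Nat.sum_range_mul_choose]
  exact sum_congr rfl fun k _ => by rw [smul_eq_mul, mul_comm]

theorem sum_ite_subset_eq_two_pow [Fintype α] [DecidableEq α] (s : Finset α) :
    ∑ t : Finset α, (if t ⊆ s then 1 else 0) = 2 ^ #s := by
  rw [← card_filter, filter_subset_univ, card_powerset]

theorem two_pow_half_le (n : ℕ) : 2 ^ (n / 2) ≤ 2 ^ (n - 2) + 1 := by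
  rcases Nat.lt_or_ge n 4 with h | h
  · interval_cases n <;> norm_num
  · exact (Nat.pow_le_pow_right two_pos (by omega)).trans (Nat.le_succ _)

end Counting

section Graph

variable {V : Type*} (G : SimpleGraph V)

/-- The subgraph of `G` induced on `S` has neither isolated vertices nor triangles. This is all that
is used of sets inducing a complete bipartite graph with nonempty parts; the empty set satisfies it
as well. -/
structure IsolateTriangleFree (S : Finset V) : Prop where
  exists_adj : ∀ v ∈ S, ∃ u ∈ S, G.Adj v u
  cliqueFreeOn : G.CliqueFreeOn S 3

variable {G}

theorem exists_triangle_of_card_lt_two_mul_card_neighbors {W : Finset V} (hW : W.Nonempty)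
    (hdeg : ∀ v ∈ W, #W < 2 * #{u ∈ W | G.Adj v u}) :
    ∃ a ∈ W, ∃ b ∈ W, ∃ c ∈ W, G.Adj a b ∧ G.Adj a c ∧ G.Adj b c := by
  obtain ⟨a, ha⟩ := hW
  have hNa : 0 < #{u ∈ W | G.Adj a u} := by have := hdeg a ha; omega
  obtain ⟨b, hb⟩ := card_pos.1 hNa
  obtain ⟨hbW, hab⟩ := mem_filter.1 hb
  have hcommon : ({u ∈ W | G.Adj a u} ∩ {u ∈ W | G.Adj b u}).Nonempty :=
    inter_nonempty_of_card_lt_card_add_card (filter_subset _ _) (filter_subset _ _)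
      (by have := hdeg a ha; have := hdeg b hbW; omega)
  obtain ⟨c, hc⟩ := hcommon
  simp only [mem_inter, mem_filter] at hc
  exact ⟨a, ha, b, hbW, c, hc.1.1, hab, hc.1.2, hc.2.2⟩

theorem not_isolateTriangleFree_of_triangle {S : Finset V} {a b c : V} (ha : a ∈ S) (hb : b ∈ S)
    (hc : c ∈ S) (hab : G.Adj a b) (hac : G.Adj a c) (hbc : G.Adj b c) :
    ¬ IsolateTriangleFree G S := fun hS =>
  hS.cliqueFreeOn (t := {a, b, c}) (by simp [Set.insert_subset_iff, ha, hb, hc])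
    (SimpleGraph.is3Clique_triple_iff.2 ⟨hab, hac, hbc⟩)

section

variable [DecidableEq V]

theorem not_isolateTriangleFree_insert_of_forall_not_adj {S : Finset V} {v : V}
    (h : ∀ u ∈ S, ¬ G.Adj v u) : ¬ IsolateTriangleFree G (insert v S) := by
  intro hS
  obtain ⟨u, hu, hvu⟩ := hS.exists_adj v (mem_insert_self v S)
  rcases mem_insert.1 hu with rfl | hu
  · exact G.irrefl hvu
  · exact h u hu hvu

theorem card_isolateTriangleFree_insert_add_le_of_forall_not_adj {U A : Finset V} {v : V}
    (hAU : A ⊆ U) (hA : ∀ u ∈ A, ¬ G.Adj v u) :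
    #{S ∈ U.powerset | IsolateTriangleFree G (insert v S)} + 2 ^ #A ≤ 2 ^ #U := by
  rw [← card_powerset A, ← card_powerset U]
  refine card_filter_add_card_le_of_forall_not (powerset_mono.2 hAU) fun S hS => ?_
  exact not_isolateTriangleFree_insert_of_forall_not_adj fun u hu => hA u (mem_powerset.1 hS hu)

theorem card_isolateTriangleFree_insert_add_le_of_triangle {U : Finset V} {v u w : V}
    (hu : u ∈ U) (hw : w ∈ U) (hvu : G.Adj v u) (hvw : G.Adj v w) (huw : G.Adj u w) :
    #{S ∈ U.powerset | IsolateTriangleFree G (insert v S)} + (2 ^ (#U - 2) + 1) ≤ 2 ^ #U := by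
  have hsub : {u, w} ⊆ U := by simp [insert_subset_iff, hu, hw]
  have hempty : ∅ ∉ Icc {u, w} U := by simp
  have hcard : #(insert ∅ (Icc {u, w} U)) = 2 ^ (#U - 2) + 1 := by
    rw [card_insert_of_notMem hempty, card_Icc_finset hsub, card_pair huw.ne]
  rw [← hcard, ← card_powerset U]
  refine card_filter_add_card_le_of_forall_not ?_ fun S hS => ?_
  · exact insert_subset (empty_mem_powerset U) fun S hS => mem_powerset.2 (mem_Icc.1 hS).2
  rcases mem_insert.1 hS with rfl | hS
  · exact not_isolateTriangleFree_insert_of_forall_not_adj (by simp)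
  · have huwS : {u, w} ⊆ S := (mem_Icc.1 hS).1
    exact not_isolateTriangleFree_of_triangle (mem_insert_self v S)
      (mem_insert_of_mem (huwS (by simp))) (mem_insert_of_mem (huwS (by simp))) hvu hvw huw

theorem exists_card_isolateTriangleFree_insert_add_two_pow_le {W : Finset V} (hW : W.Nonempty) :
    ∃ v ∈ W, #{S ∈ (W.erase v).powerset | IsolateTriangleFree G (insert v S)} +
      2 ^ (#(W.erase v) / 2) ≤ 2 ^ #(W.erase v) := by
  by_cases hlow : ∃ v ∈ W, 2 * #{u ∈ W | G.Adj v u} ≤ #W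
  · obtain ⟨v, hv, hdeg⟩ := hlow
    refine ⟨v, hv, ?_⟩
    have hlarge : #(W.erase v) / 2 ≤ #({u ∈ W | ¬ G.Adj v u}.erase v) := by
      have hsplit := card_filter_add_card_filter_not (s := W) fun u => G.Adj v u
      rw [card_erase_of_mem hv, card_erase_of_mem (by simp [hv])]
      omega
    have hcount := card_isolateTriangleFree_insert_add_le_of_forall_not_adj
      (erase_subset_erase v (filter_subset (fun u => ¬ G.Adj v u) W))
      fun u hu => (mem_filter.1 (mem_of_mem_erase hu)).2
    exact (Nat.add_le_add_left (Nat.pow_le_pow_right two_pos hlarge) _).trans hcount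
  · push Not at hlow
    obtain ⟨v, hv, u, hu, w, hw, hvu, hvw, huw⟩ :=
      exists_triangle_of_card_lt_two_mul_card_neighbors hW hlow
    refine ⟨v, hv, (Nat.add_le_add_left (two_pow_half_le _) _).trans ?_⟩
    exact card_isolateTriangleFree_insert_add_le_of_triangle (mem_erase.2 ⟨hvu.ne', hu⟩)
      (mem_erase.2 ⟨hvw.ne', hw⟩) hvu hvw huw

end

variable (G)

theorem card_isolateTriangleFree_add_two_pow_le (W : Finset V) :
    #{S ∈ W.powerset | IsolateTriangleFree G S} + 2 ^ (#W / 2) + 2 ^ ((#W + 1) / 2) ≤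
      2 ^ #W + 2 := by
  induction hn : #W generalizing W with
  | zero =>
    have hle := card_filter_le W.powerset fun S => IsolateTriangleFree G S
    rw [card_powerset, hn] at hle
    omega
  | succ n ih =>
    have hW : W.Nonempty := card_pos.1 (by omega)
    obtain ⟨v, hv, hext⟩ := exists_card_isolateTriangleFree_insert_add_two_pow_le (G := G) hW
    have herase : #(W.erase v) = n := by rw [card_erase_of_mem hv, hn, Nat.add_sub_cancel]
    rw [herase] at hext
    have hrest := ih (W.erase v) herase
    have hhalf : (n + 1 + 1) / 2 = n / 2 + 1 := by omega
    rw [card_filter_powerset_eq_add_of_mem _ hv, hhalf, pow_succ, pow_succ]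
    omega

end Graph

section ReversalGraph

variable {X : Type*}

/-- The graph joining two alternatives that `R` and `R'` rank strictly and in opposite ways. -/
def reversalGraph (R R' : X → X → Prop) : SimpleGraph X where
  Adj x y := (asymPart R x y ∧ asymPart R' y x) ∨ (asymPart R y x ∧ asymPart R' x y)
  symm := ⟨fun _ _ => Or.symm⟩
  loopless := ⟨fun _ h => h.elim (fun h => h.1.2 h.1.1) fun h => h.1.2 h.1.1⟩

theorem reversalGraph_comm (R R' : X → X → Prop) : reversalGraph R R' = reversalGraph R' R := by
  ext x y
  simp only [reversalGraph, and_comm, or_comm]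

variable [DecidableEq X]

theorem maxSet_subset (S : Finset X) (R : X → X → Prop) : MaxSet S R ⊆ S :=
  filter_subset _ S

variable {R R' : X → X → Prop} {S : Finset X} {x y : X}

theorem mem_maxSet_iff_forall_rel [Std.Total R] : x ∈ MaxSet S R ↔ x ∈ S ∧ ∀ y ∈ S, R x y := by
  rw [MaxSet, mem_filter]
  refine and_congr_right fun _ => forall₂_congr fun y _ => ?_
  have := Std.Total.total (r := R) x y
  rw [asymPart]
  tauto

theorem maxSet_nonempty [Std.Total R] [IsTrans X R] (hS : S.Nonempty) :
    (MaxSet S R).Nonempty := by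
  suffices h : ∃ x ∈ S, ∀ y ∈ S, R x y by
    simpa only [Finset.Nonempty, mem_maxSet_iff_forall_rel] using h
  induction hS using Finset.Nonempty.cons_induction with
  | singleton a => exact ⟨a, by simp [refl_of R a]⟩
  | cons a s _ _ ih =>
    obtain ⟨b, hb, hmax⟩ := ih
    simp only [mem_cons, exists_eq_or_imp, forall_eq_or_imp]
    rcases Std.Total.total (r := R) a b with hab | hba
    · exact Or.inl ⟨refl_of R a, fun y hy => trans_of R hab (hmax y hy)⟩
    · exact Or.inr ⟨b, hb, hba, hmax⟩

theorem asymPart_of_mem_maxSet_of_notMem_maxSet [Std.Total R] [IsTrans X R]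
    (hx : x ∈ MaxSet S R) (hyS : y ∈ S) (hy : y ∉ MaxSet S R) : asymPart R x y := by
  rw [mem_maxSet_iff_forall_rel] at hx hy
  exact ⟨hx.2 y hyS, fun hyx => hy ⟨hyS, fun z hz => trans_of R hyx (hx.2 z hz)⟩⟩

theorem not_reversalGraph_adj_of_mem_maxSet (hx : x ∈ MaxSet S R) (hy : y ∈ MaxSet S R) :
    ¬ (reversalGraph R R').Adj x y := by
  rintro (⟨hxy, -⟩ | ⟨hyx, -⟩)
  · exact (mem_filter.1 hy).2 x (maxSet_subset S R hx) hxy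
  · exact (mem_filter.1 hx).2 y (maxSet_subset S R hy) hyx

theorem mem_maxSet_iff_notMem_maxSet_of_reversalGraph_adj (hx : x ∈ MaxSet S R ∆ MaxSet S R')
    (hy : y ∈ MaxSet S R ∆ MaxSet S R') (hxy : (reversalGraph R R').Adj x y) :
    x ∈ MaxSet S R ↔ y ∉ MaxSet S R := by
  have hnotBoth : ¬ (x ∈ MaxSet S R ∧ y ∈ MaxSet S R) := fun h =>
    not_reversalGraph_adj_of_mem_maxSet h.1 h.2 hxy
  have hnotBoth' : ¬ (x ∈ MaxSet S R' ∧ y ∈ MaxSet S R') := fun h =>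
    not_reversalGraph_adj_of_mem_maxSet h.1 h.2 (reversalGraph_comm R R' ▸ hxy)
  rw [mem_symmDiff] at hx hy
  tauto

theorem cliqueFreeOn_reversalGraph_symmDiff_maxSet :
    (reversalGraph R R').CliqueFreeOn ↑(MaxSet S R ∆ MaxSet S R') 3 := by
  intro T hT hclique
  obtain ⟨a, b, c, hab, hac, hbc, rfl⟩ := SimpleGraph.is3Clique_iff.1 hclique
  have ha := mem_coe.1 (hT (mem_coe.2 (by simp : a ∈ ({a, b, c} : Finset X))))
  have hb := mem_coe.1 (hT (mem_coe.2 (by simp : b ∈ ({a, b, c} : Finset X))))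
  have hc := mem_coe.1 (hT (mem_coe.2 (by simp : c ∈ ({a, b, c} : Finset X))))
  have := mem_maxSet_iff_notMem_maxSet_of_reversalGraph_adj ha hb hab
  have := mem_maxSet_iff_notMem_maxSet_of_reversalGraph_adj ha hc hac
  have := mem_maxSet_iff_notMem_maxSet_of_reversalGraph_adj hb hc hbc
  tauto

variable [Std.Total R] [IsTrans X R] [Std.Total R'] [IsTrans X R']

theorem exists_reversalGraph_adj_of_mem_sdiff (hS : MaxSet S R ∆ MaxSet S R' = S)
    (hx : x ∈ MaxSet S R \ MaxSet S R') : ∃ y ∈ S, (reversalGraph R R').Adj x y := by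
  obtain ⟨hxR, hxR'⟩ := mem_sdiff.1 hx
  have hxS : x ∈ S := maxSet_subset S R hxR
  obtain ⟨y, hyR'⟩ := maxSet_nonempty (R := R') ⟨x, hxS⟩
  have hyS : y ∈ S := maxSet_subset S R' hyR'
  have hyR : y ∉ MaxSet S R := by
    have hy := hS.symm ▸ hyS
    rw [mem_symmDiff] at hy
    tauto
  exact ⟨y, hyS, Or.inl ⟨asymPart_of_mem_maxSet_of_notMem_maxSet hxR hyS hyR,
    asymPart_of_mem_maxSet_of_notMem_maxSet hyR' hxS hxR'⟩⟩

theorem isolateTriangleFree_reversalGraph (hS : MaxSet S R ∆ MaxSet S R' = S) :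
    IsolateTriangleFree (reversalGraph R R') S where
  exists_adj x hxS := by
    rw [← hS, Finset.mem_symmDiff, ← mem_sdiff, ← mem_sdiff] at hxS
    rcases hxS with hx | hx
    · exact exists_reversalGraph_adj_of_mem_sdiff hS hx
    · rw [reversalGraph_comm]
      exact exists_reversalGraph_adj_of_mem_sdiff (symmDiff_comm (MaxSet S R) _ ▸ hS) hx
  cliqueFreeOn := by
    simpa only [hS] using
      cliqueFreeOn_reversalGraph_symmDiff_maxSet (S := S) (R := R) (R' := R')

end ReversalGraph

section Distance

variable {X : Type*} [Fintype X] [DecidableEq X]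

theorem dtop_add_two_pow_card_le (R R' : X → X → Prop) :
    Dtop R R' + 2 ^ Fintype.card X ≤
      Fintype.card X * 2 ^ (Fintype.card X - 1) +
        #{S : Finset X | MaxSet S R ∆ MaxSet S R' = S} := by
  have hS (S : Finset X) : #(MaxSet S R ∆ MaxSet S R') + 1 ≤
      #S + if MaxSet S R ∆ MaxSet S R' = S then 1 else 0 := by
    have hsub : MaxSet S R ∆ MaxSet S R' ⊆ S :=
      symmDiff_le_sup.trans (union_subset (maxSet_subset S R) (maxSet_subset S R'))
    split_ifs with h
    · rw [h]
    · exact card_lt_card (hsub.ssubset_of_ne h)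
  have hsum := sum_le_sum fun S (_ : S ∈ (univ : Finset (Finset X))) => hS S
  rwa [sum_add_distrib, sum_add_distrib, sum_card_finset, ← card_filter, ← card_eq_sum_ones,
    card_univ, Fintype.card_finset] at hsum

theorem dtop_add_two_pow_add_two_pow_le {R R' : X → X → Prop} (hR : TotalPreorderRel R)
    (hR' : TotalPreorderRel R') :
    Dtop R R' + 2 ^ (Fintype.card X / 2) + 2 ^ ((Fintype.card X + 1) / 2) ≤
      Fintype.card X * 2 ^ (Fintype.card X - 1) + 2 := by
  have : Std.Total R := ⟨hR.2.2⟩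
  have : IsTrans X R := ⟨fun _ _ _ hxy hyz => hR.2.1 hxy hyz⟩
  have : Std.Total R' := ⟨hR'.2.2⟩
  have : IsTrans X R' := ⟨fun _ _ _ hxy hyz => hR'.2.1 hxy hyz⟩
  have hfull : #{S : Finset X | MaxSet S R ∆ MaxSet S R' = S} ≤
      #{S ∈ univ.powerset | IsolateTriangleFree (reversalGraph R R') S} :=
    card_le_card fun S hS => mem_filter.2 ⟨mem_powerset.2 (subset_univ S),
      isolateTriangleFree_reversalGraph (mem_filter.1 hS).2⟩
  have hgraph := card_isolateTriangleFree_add_two_pow_le (reversalGraph R R') univ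
  rw [card_univ] at hgraph
  have hdist := dtop_add_two_pow_card_le R R'
  linarith

end Distance

section Extremal

variable {X α : Type*} [LinearOrder α]

/-- The total preorder on `X` whose top indifference class is `A` and which ranks the elements
outside `A` by `e`, a smaller value of `e` being better. -/
def topClassRel (A : Finset X) (e : X → α) (x y : X) : Prop :=
  x ∈ A ∨ (y ∉ A ∧ e x ≤ e y)

theorem totalPreorderRel_topClassRel (A : Finset X) (e : X → α) :
    TotalPreorderRel (topClassRel A e) :=
  ⟨fun _ => by grind [topClassRel], fun _ _ _ => by grind [topClassRel],
    fun _ _ => by grind [topClassRel]⟩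

variable [DecidableEq X] {A B S : Finset X} {e : X → α}

theorem mem_maxSet_topClassRel {x : X} :
    x ∈ MaxSet S (topClassRel A e) ↔ x ∈ S ∧ ∀ y ∈ S, topClassRel A e x y :=
  have : Std.Total (topClassRel A e) := ⟨(totalPreorderRel_topClassRel A e).2.2⟩
  mem_maxSet_iff_forall_rel

theorem maxSet_topClassRel_of_inter_nonempty (hSA : (S ∩ A).Nonempty) :
    MaxSet S (topClassRel A e) = S ∩ A := by
  obtain ⟨a, ha⟩ := hSA
  obtain ⟨haS, haA⟩ := mem_inter.1 ha
  ext x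
  rw [mem_maxSet_topClassRel, mem_inter]
  exact and_congr_right fun _ =>
    ⟨fun h => (h a haS).resolve_right fun h' => h'.1 haA, fun hx _ _ => Or.inl hx⟩

theorem card_maxSet_topClassRel_le_one (he : Function.Injective e) (hSA : Disjoint S A) :
    #(MaxSet S (topClassRel A e)) ≤ 1 := by
  refine card_le_one.2 fun x hx y hy => ?_
  rw [mem_maxSet_topClassRel] at hx hy
  have hxy := ((hx.2 y hy.1).resolve_left (disjoint_left.1 hSA hx.1)).2
  have hyx := ((hy.2 x hx.1).resolve_left (disjoint_left.1 hSA hy.1)).2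
  exact he (le_antisymm hxy hyx)

theorem card_le_card_symmDiff_maxSet_topClassRel_add_one (he : Function.Injective e)
    (hSA : S ⊆ A) (hSB : Disjoint S B) :
    #S ≤ #(MaxSet S (topClassRel A e) ∆ MaxSet S (topClassRel B e)) + 1 := by
  rcases S.eq_empty_or_nonempty with rfl | hS
  · simp
  have htop : MaxSet S (topClassRel A e) = S := by
    rw [maxSet_topClassRel_of_inter_nonempty (by rwa [inter_eq_left.2 hSA]), inter_eq_left.2 hSA]
  have hsub : S \ MaxSet S (topClassRel B e) ⊆ S ∆ MaxSet S (topClassRel B e) :=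
    subset_union_left
  have hsdiff := le_card_sdiff (MaxSet S (topClassRel B e)) S
  have hone := card_maxSet_topClassRel_le_one he hSB
  have hcard := card_le_card hsub
  rw [htop]
  omega

variable [Fintype X]

theorem symmDiff_maxSet_topClassRel_compl (hSA : (S ∩ A).Nonempty) (hSA' : (S ∩ Aᶜ).Nonempty) :
    MaxSet S (topClassRel A e) ∆ MaxSet S (topClassRel Aᶜ e) = S := by
  rw [maxSet_topClassRel_of_inter_nonempty hSA, maxSet_topClassRel_of_inter_nonempty hSA']
  ext x
  simp only [mem_symmDiff, mem_inter, mem_compl]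
  tauto

variable (A S)

theorem card_add_ite_le_card_symmDiff_maxSet_topClassRel (he : Function.Injective e) :
    #S + (if S = ∅ then 2 else 0) ≤
      #(MaxSet S (topClassRel A e) ∆ MaxSet S (topClassRel Aᶜ e)) +
        (if S ⊆ A then 1 else 0) + if S ⊆ Aᶜ then 1 else 0 := by
  rcases eq_or_ne S ∅ with rfl | hS
  · simp
  rw [if_neg hS, add_zero]
  by_cases hSA : S ⊆ A
  · rw [if_pos hSA]
    have hdisj : Disjoint S Aᶜ := disjoint_compl_right.mono_left hSA
    exact (card_le_card_symmDiff_maxSet_topClassRel_add_one he hSA hdisj).trans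
      (Nat.le_add_right _ _)
  by_cases hSA' : S ⊆ Aᶜ
  · rw [if_neg hSA, if_pos hSA', symmDiff_comm]
    have hdisj : Disjoint S A := disjoint_compl_left.mono_left hSA'
    exact card_le_card_symmDiff_maxSet_topClassRel_add_one he hSA' hdisj
  · have hmeetA : (S ∩ A).Nonempty := by
      rwa [← not_disjoint_iff_nonempty_inter, ← subset_compl_iff_disjoint_right]
    have hmeetA' : (S ∩ Aᶜ).Nonempty := by
      rwa [← not_disjoint_iff_nonempty_inter, disjoint_compl_right_iff]
    rw [symmDiff_maxSet_topClassRel_compl hmeetA hmeetA', if_neg hSA, if_neg hSA', add_zero,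
      add_zero]

theorem le_dtop_topClassRel_compl_add (he : Function.Injective e) :
    Fintype.card X * 2 ^ (Fintype.card X - 1) + 2 ≤
      Dtop (topClassRel A e) (topClassRel Aᶜ e) + 2 ^ #A + 2 ^ #Aᶜ := by
  have hsum := sum_le_sum fun S (_ : S ∈ (univ : Finset (Finset X))) =>
    card_add_ite_le_card_symmDiff_maxSet_topClassRel A S he
  rwa [sum_add_distrib, sum_add_distrib, sum_add_distrib, sum_card_finset,
    sum_ite_subset_eq_two_pow, sum_ite_subset_eq_two_pow, Fintype.sum_ite_eq'] at hsum

end Extremal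

/-- Theorem 4.1: the `D`-diameter of the set of total preorders on an
`n`-element set (`n ≥ 2`) equals `n·2^{n−1} + 2 − 2^{⌊n/2⌋} − 2^{⌈n/2⌉}`. -/
theorem stmt_14 {X : Type*} [Fintype X] [DecidableEq X] (hn : 2 ≤ Fintype.card X) :
    (∀ R R' : X → X → Prop, TotalPreorderRel R → TotalPreorderRel R' →
        (Dtop R R' : ℤ) ≤ (Fintype.card X : ℤ) * 2 ^ (Fintype.card X - 1) + 2
          - 2 ^ (Fintype.card X / 2) - 2 ^ ((Fintype.card X + 1) / 2)) ∧
    (∃ R R' : X → X → Prop, TotalPreorderRel R ∧ TotalPreorderRel R' ∧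
        (Dtop R R' : ℤ) = (Fintype.card X : ℤ) * 2 ^ (Fintype.card X - 1) + 2
          - 2 ^ (Fintype.card X / 2) - 2 ^ ((Fintype.card X + 1) / 2)) := by
  refine ⟨fun R R' hR hR' => ?_, ?_⟩
  · have hupper := dtop_add_two_pow_add_two_pow_le hR hR'
    zify at hupper
    linarith
  · obtain ⟨A, -, hA⟩ := exists_subset_card_eq
      (show Fintype.card X / 2 ≤ #(univ : Finset X) from Nat.div_le_self _ _)
    have hA' : #Aᶜ = (Fintype.card X + 1) / 2 := by rw [card_compl]; omega
    have hR := totalPreorderRel_topClassRel A (Fintype.equivFin X)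
    have hR' := totalPreorderRel_topClassRel Aᶜ (Fintype.equivFin X)
    refine ⟨_, _, hR, hR', ?_⟩
    have hupper := dtop_add_two_pow_add_two_pow_le hR hR'
    have hlower := le_dtop_topClassRel_compl_add A (Fintype.equivFin X).injective
    rw [hA, hA'] at hlower
    zify at hupper hlower
    linarith
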